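/- If in addition f'(x_i) ≠ 0 for every data point x_i, then the mean shift sequence is eventually monotone: there exists N such that either y_{j+1} ≥ y_j for all j ≥ N, or y_{j+1} ≤ y_j for all j ≥ N; consequently (y_j) converges. -/

import Mathlib

open Filter Finset

theorem ms_cross (u : ℕ → ℝ) (hs : Tendsto (fun j => u (j+1) - u j) atTop (nhds 0)) (a b : ℝ)
    (hab : a < b) (h1 : ∃ᶠ j in atTop, u j < a) (h2 : ∃ᶠ j in atTop, b < u j) :
    ∃ᶠ j in atTop, a ≤ u j ∧ u j ≤ b := by
  rw [Filter.frequently_atTop] at *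
  intro N
  have h3 : ∀ᶠ j in atTop, u (j+1) - u j < b - a :=
    hs.eventually (gt_mem_nhds (by linarith))
  obtain ⟨M, hM⟩ := eventually_atTop.1 h3
  obtain ⟨p, hp, hpa⟩ := h1 (max N M)
  by_contra hcon
  push Not at hcon
  have key : ∀ j ≥ p, u j < a := by
    intro j hj
    induction j, hj using Nat.le_induction with
    | base => exact hpa
    | succ j hj ih =>
      have e1 := hM j (by have := le_max_right N M; omega)
      by_contra hc
      have e2 := hcon (j+1) (by have := le_max_left N M; omega) (not_lt.1 hc)
      linarith
  obtain ⟨q, hq, hqb⟩ := h2 p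
  linarith [key q hq]

theorem ms_conv (T : ℝ → ℝ) (hT : Continuous T) (u : ℕ → ℝ) (hu : ∀ j, u (j+1) = T (u j))
    (hs : Tendsto (fun j => u (j+1) - u j) atTop (nhds 0)) (R : ℝ) (hR : ∀ j, |u j| ≤ R) :
    ∃ l, Tendsto u atTop (nhds l) := by
  refine tendsto_of_no_upcrossings (s := Set.univ) dense_univ ?_ ?_ ?_
  · rintro a - b - hab ⟨h1, h2⟩
    have sub : ∀ a' b', a ≤ a' → b' ≤ b → a' < b' → ∃ᶠ j in atTop, a' ≤ u j ∧ u j ≤ b' := by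
      intro a' b' ha hb hab'
      exact ms_cross u hs a' b' hab' (h1.mono fun j hj => by linarith)
        (h2.mono fun j hj => by linarith)
    have fixed : ∀ c, a ≤ c → c < b → T c = c := by
      intro c hac hcb
      by_contra hne
      have hpos : 0 < |T c - c| := abs_pos.2 (sub_ne_zero.2 hne)
      have hcont : Continuous fun z => |T z - z| := by fun_prop
      have hev : ∀ᶠ z in nhds c, |T c - c| / 2 < |T z - z| :=
        hcont.continuousAt.eventually (lt_mem_nhds (by linarith))
      obtain ⟨δ, hδ, hball⟩ := Metric.eventually_nhds_iff.1 hev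
      have hf := sub c (min b (c + δ/2)) hac (min_le_left _ _) (lt_min hcb (by linarith))
      have hev2 : ∀ᶠ j in atTop, |u (j+1) - u j| < |T c - c| / 2 := by
        have := hs.abs
        rw [abs_zero] at this
        exact this.eventually (gt_mem_nhds (by linarith))
      obtain ⟨j, ⟨hj1, hj2⟩, hj3⟩ := (hf.and_eventually hev2).exists
      have := min_le_right b (c + δ/2)
      have h4 := @hball (u j) (by rw [Real.dist_eq, abs_lt]; constructor <;> linarith)
      rw [hu] at hj3
      linarith
    have hf := sub a ((a+b)/2) le_rfl (by linarith) (by linarith)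
    obtain ⟨j, hj1, hj2⟩ := hf.exists
    have hfx := fixed (u j) hj1 (by linarith)
    have hconst : ∀ m ≥ j, u m = u j := by
      intro m hm
      induction m, hm using Nat.le_induction with
      | base => rfl
      | succ m hm ih => rw [hu, ih, hfx]
    obtain ⟨m, hm, hm2⟩ := Filter.frequently_atTop.1 h1 j
    rw [hconst m hm] at hm2
    linarith
  · exact isBoundedUnder_of ⟨R, fun j => (abs_le.1 (hR j)).2⟩
  · exact isBoundedUnder_of ⟨-R, fun j => (abs_le.1 (hR j)).1⟩

theorem ms_mono (T : ℝ → ℝ) (hT : Continuous T) (u : ℕ → ℝ) (hu : ∀ j, u (j+1) = T (u j))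
    (l r : ℝ) (N : ℕ) (hN : ∀ j ≥ N, l < u j ∧ u j < r)
    (hc : ∀ p z, l < p → p < r → l < z → z < r → T p = p → z < p → T z ≤ p) :
    (∃ N : ℕ, (∀ j ≥ N, u j ≤ u (j + 1)) ∨ (∀ j ≥ N, u (j + 1) ≤ u j)) := by
  by_cases hex : ∃ j ≥ N, u j ≤ u (j+1)
  · obtain ⟨M, hM, hMu⟩ := hex
    refine ⟨M, Or.inl ?_⟩
    intro j hj
    induction j, hj using Nat.le_induction with
    | base => exact hMu
    | succ j hj ih =>
      by_contra hlt
      push Not at hlt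
      have a1 := hN j (by omega)
      have a2 := hN (j+1) (by omega)
      rcases ih.eq_or_lt with heq | hlt2
      · have : u (j+1+1) = u (j+1) := by rw [hu (j+1), ← heq, ← hu j, heq]
        linarith
      have hcont : ContinuousOn (fun z => T z - z) (Set.Icc (u j) (u (j+1))) := by fun_prop
      have hivt := intermediate_value_Icc' ih hcont
      have hmem : (0:ℝ) ∈ Set.Icc (T (u (j+1)) - u (j+1)) (T (u j) - u j) := by
        rw [← hu, ← hu]; constructor <;> linarith
      obtain ⟨p, ⟨hp1, hp2⟩, hp3⟩ := hivt hmem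
      have hp3 : T p = p := by simpa [sub_eq_zero] using hp3
      have hne1 : u j ≠ p := by rintro rfl; rw [← hu] at hp3; linarith
      have hne2 : p ≠ u (j+1) := by rintro rfl; rw [← hu] at hp3; linarith
      have := hc p (u j) (by linarith) (by linarith) a1.1 a1.2 hp3 (lt_of_le_of_ne hp1 hne1)
      rw [← hu] at this
      exact hne2 (le_antisymm hp2 this)
  · push Not at hex
    exact ⟨N, Or.inr fun j hj => (hex j hj).le⟩

theorem ms_grad (k g : ℝ → ℝ) (hk_conv : ConvexOn ℝ (Set.Ici 0) k) (hk : Differentiable ℝ k)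
    (hg : ∀ t, g t = -(deriv k t)) (s t : ℝ) (hs : 0 ≤ s) (ht : 0 ≤ t) :
    g s * (s - t) ≤ k t - k s := by
  rcases lt_trichotomy s t with h | h | h
  · have := hk_conv.deriv_le_slope hs ht h (hk s)
    rw [slope_def_field, le_div_iff₀ (by linarith)] at this
    rw [hg]; linarith
  · subst h; simp
  · have := hk_conv.slope_le_deriv ht hs h (hk s)
    rw [slope_def_field, div_le_iff₀ (by linarith)] at this
    rw [hg]; linarith

theorem mean_shift_eventually_monotone_of_deriv_ne_zero
(n : ℕ) (hn : 0 < n) (x : Fin n → ℝ) (h : ℝ) (hh : 0 < h)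
(c : ℝ) (hc : 0 < c)
    (k g : ℝ → ℝ)
    (hk_nonneg : ∀ t ∈ Set.Ici (0:ℝ), 0 ≤ k t)
    (hk_conv : ConvexOn ℝ (Set.Ici 0) k)
    (hk_smooth : ContDiff ℝ 1 k)
    (hk_anti : StrictAntiOn k (Set.Ici 0))
    (hg : ∀ t, g t = -(deriv k t))
    (hg_pos : ∀ t ∈ Set.Ici (0:ℝ), 0 < g t)
    (hg_anti : StrictAntiOn g (Set.Ici 0))
    (f T : ℝ → ℝ)
    (hf : ∀ z, f z = c / (n * h) * ∑ i, k (((z - x i) / h) ^ 2))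
    (hT : ∀ z, T z = (∑ i, x i * g (((z - x i) / h) ^ 2)) / (∑ i, g (((z - x i) / h) ^ 2)))
(y : ℕ → ℝ) (hy0 : ∃ i, y 0 = x i) (hyit : ∀ j, y (j + 1) = T (y j))
    (hfx : ∀ i, deriv f (x i) ≠ 0) :
    (∃ N : ℕ, (∀ j ≥ N, y j ≤ y (j + 1)) ∨ (∀ j ≥ N, y (j + 1) ≤ y j)) ∧
      ∃ ystar : ℝ, Tendsto y atTop (nhds ystar) := by
  have hne : (univ : Finset (Fin n)).Nonempty := ⟨⟨0, hn⟩, mem_univ _⟩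
  have hkd : Differentiable ℝ k := hk_smooth.differentiable (by norm_num)
  have hgc : Continuous g := by
    have : g = fun t => -(deriv k t) := funext hg
    rw [this]
    exact (hk_smooth.continuous_deriv (by norm_num)).neg
  have hwpos : ∀ z i, 0 < g (((z - x i) / h) ^ 2) := fun z i => hg_pos _ (Set.mem_Ici.2 (sq_nonneg _))
  have hGpos : ∀ z, 0 < ∑ i, g (((z - x i) / h) ^ 2) := fun z =>
    Finset.sum_pos (fun i _ => hwpos z i) hne
  have hTc : Continuous T := by
    have : T = _ := funext hT
    rw [this]
    refine Continuous.div (by fun_prop) (by fun_prop) (fun z => (hGpos z).ne')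
  -- weighted identity
  have hid : ∀ z p, ∑ i, (x i - p) * g (((z - x i) / h) ^ 2)
      = (T z - p) * ∑ i, g (((z - x i) / h) ^ 2) := by
    intro z p
    rw [hT, sub_mul, div_mul_cancel₀ _ (hGpos z).ne', Finset.mul_sum, ← Finset.sum_sub_distrib]
    exact Finset.sum_congr rfl fun i _ => by ring
  -- bound
  obtain ⟨R, hR⟩ : ∃ R, ∀ i, |x i| ≤ R := by
    obtain ⟨R, hR⟩ := (Set.finite_range fun i => |x i|).bddAbove
    exact ⟨R, fun i => hR ⟨i, rfl⟩⟩
  have hTR : ∀ z, |T z| ≤ R := by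
    intro z
    rw [abs_le]
    constructor
    · have h1 := hid z (-R)
      have h2 : 0 ≤ ∑ i, (x i - (-R)) * g (((z - x i) / h) ^ 2) :=
        Finset.sum_nonneg fun i _ => mul_nonneg (by linarith [(abs_le.1 (hR i)).1]) (hwpos z i).le
      rw [h1] at h2
      linarith [nonneg_of_mul_nonneg_left h2 (hGpos z)]
    · have h1 := hid z R
      have h2 : ∑ i, (x i - R) * g (((z - x i) / h) ^ 2) ≤ 0 :=
        Finset.sum_nonpos fun i _ => mul_nonpos_of_nonpos_of_nonneg
          (by linarith [(abs_le.1 (hR i)).2]) (hwpos z i).le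
      rw [h1] at h2
      by_contra hlt
      push Not at hlt
      linarith [mul_pos (sub_pos.2 hlt) (hGpos z)]
  have hyR : ∀ j, |y j| ≤ R := by
    rintro (_ | j)
    · obtain ⟨i, hi⟩ := hy0
      rw [hi]; exact hR i
    · rw [hyit]; exact hTR _
  -- ascent
  set S : ℝ → ℝ := fun z => ∑ i, k (((z - x i) / h) ^ 2) with hS
  have hasc : ∀ z, (∑ i, g (((z - x i) / h) ^ 2)) * ((T z - z) / h) ^ 2 ≤ S (T z) - S z := by
    intro z
    have h1 : ∑ i, g (((z - x i) / h) ^ 2) * (((z - x i) / h) ^ 2 - ((T z - x i) / h) ^ 2)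
        ≤ S (T z) - S z := by
      rw [hS]
      simp only
      rw [← Finset.sum_sub_distrib]
      exact Finset.sum_le_sum fun i _ =>
        ms_grad k g hk_conv hkd hg _ _ (sq_nonneg _) (sq_nonneg _)
    refine le_of_eq_of_le ?_ h1
    have h2 : ∑ i, g (((z - x i) / h) ^ 2) * (((z - x i) / h) ^ 2 - ((T z - x i) / h) ^ 2)
        = 2 * (T z - z) / h^2 * ∑ i, (x i - (z + T z) / 2) * g (((z - x i) / h) ^ 2) := by
      rw [Finset.mul_sum]
      refine Finset.sum_congr rfl fun i _ => ?_
      field_simp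
      ring
    rw [h2, hid]
    field_simp
    ring
  have hR0 : 0 ≤ R := (abs_nonneg _).trans (hyR 0)
  set γ := g ((2 * R / h) ^ 2) with hγ
  have hγpos : 0 < γ := hg_pos _ (Set.mem_Ici.2 (sq_nonneg _))
  have hGγ : ∀ j, γ ≤ ∑ i, g (((y j - x i) / h) ^ 2) := by
    intro j
    refine le_trans ?_ (Finset.single_le_sum (fun i _ => (hwpos (y j) i).le)
      (mem_univ (⟨0, hn⟩ : Fin n)))
    refine hg_anti.antitoneOn (Set.mem_Ici.2 (sq_nonneg _)) (Set.mem_Ici.2 (sq_nonneg _)) ?_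
    have a1 := abs_le.1 (hyR j)
    have a2 := abs_le.1 (hR ⟨0, hn⟩)
    rw [div_pow, div_pow]
    gcongr ?_ / _
    apply sq_le_sq'  <;> linarith
  have hstep : ∀ j, γ * ((y (j+1) - y j) / h) ^ 2 ≤ S (y (j+1)) - S (y j) := by
    intro j
    have := hasc (y j)
    rw [← hyit] at this
    exact (mul_le_mul_of_nonneg_right (hGγ j) (sq_nonneg _)).trans this
  have hmono : Monotone fun j => S (y j) := monotone_nat_of_le_succ fun j => by
    have := hstep j
    have h2 : 0 ≤ γ * ((y (j+1) - y j) / h) ^ 2 := by positivity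
    linarith
  have hbdd : BddAbove (Set.range fun j => S (y j)) := by
    refine ⟨∑ _i : Fin n, k 0, ?_⟩
    rintro _ ⟨j, rfl⟩
    exact Finset.sum_le_sum fun i _ =>
      hk_anti.antitoneOn (Set.mem_Ici.2 le_rfl) (Set.mem_Ici.2 (sq_nonneg _)) (sq_nonneg _)
  have hlim := tendsto_atTop_ciSup hmono hbdd
  have hd : Tendsto (fun j => S (y (j+1)) - S (y j)) atTop (nhds 0) := by
    have := (hlim.comp (tendsto_add_atTop_nat 1)).sub hlim
    simpa using this
  have hsq : Tendsto (fun j => (y (j+1) - y j)^2) atTop (nhds 0) := by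
    have h1 := hd.const_mul (h^2 / γ)
    rw [mul_zero] at h1
    refine squeeze_zero (fun j => sq_nonneg _) (fun j => ?_) h1
    calc (y (j+1) - y j)^2 = (h^2/γ) * (γ * ((y (j+1) - y j) / h) ^ 2) := by field_simp
      _ ≤ _ := mul_le_mul_of_nonneg_left (hstep j) (by positivity)
  have hs : Tendsto (fun j => y (j+1) - y j) atTop (nhds 0) := by
    have h1 := hsq.sqrt
    simp only [Real.sqrt_sq_eq_abs, Real.sqrt_zero] at h1
    exact (tendsto_zero_iff_abs_tendsto_zero _).2 h1
  obtain ⟨l, hl⟩ := ms_conv T hTc y hyit hs R hyR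
  refine ⟨?_, l, hl⟩
  have hfix : T l = l := by
    have h1 := (hTc.tendsto l).comp hl
    have h2 := hl.comp (tendsto_add_atTop_nat 1)
    refine tendsto_nhds_unique h1 (h2.congr fun j => ?_)
    simp [hyit]
  have hlx : ∀ i, x i ≠ l := by
    intro i hi
    apply hfx i
    rw [hi]
    have hder : HasDerivAt f (c / (n * h) * ∑ i, deriv k (((l - x i) / h) ^ 2) *
        (2 * ((l - x i) / h) * (1 / h))) l := by
      have : f = _ := funext hf
      rw [this]
      refine HasDerivAt.const_mul _ ?_
      refine HasDerivAt.fun_sum fun i _ => ?_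
      have h1 : HasDerivAt (fun z => ((z - x i) / h) ^ 2) (2 * ((l - x i) / h) * (1 / h)) l := by
        have := (((hasDerivAt_id l).sub_const (x i)).div_const h).fun_pow 2
        simpa using this
      exact (hkd _).hasDerivAt.comp l h1
    rw [hder.deriv]
    have h0 := hid l l
    rw [hfix, sub_self, zero_mul] at h0
    have : ∑ i, deriv k (((l - x i) / h) ^ 2) * (2 * ((l - x i) / h) * (1 / h))
        = 2 / h^2 * ∑ i, (x i - l) * g (((l - x i) / h) ^ 2) := by
      rw [Finset.mul_sum]
      refine Finset.sum_congr rfl fun i _ => ?_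
      rw [hg]
      field_simp
      ring
    rw [this, h0]; simp
  obtain ⟨δ, hδ, hfree⟩ : ∃ δ > 0, ∀ i, δ ≤ |x i - l| := by
    obtain ⟨i, -, hi⟩ := Finset.exists_min_image univ (fun i => |x i - l|) hne
    exact ⟨_, abs_pos.2 (sub_ne_zero.2 (hlx i)), fun j => hi j (mem_univ _)⟩
  have hev : ∀ᶠ j in atTop, y j ∈ Set.Ioo (l - δ) (l + δ) :=
    hl.eventually (Ioo_mem_nhds (by linarith) (by linarith))
  obtain ⟨N, hN⟩ := eventually_atTop.1 hev
  refine ms_mono T hTc y hyit (l - δ) (l + δ) N (fun j hj => hN j hj) ?_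
  intro p z hp1 hp2 hz1 hz2 hp hzp
  have h0 := hid p p
  rw [hp, sub_self, zero_mul] at h0
  have h1 : ∑ i, (x i - p) * g (((z - x i) / h) ^ 2) ≤
      ∑ i, (x i - p) * g (((p - x i) / h) ^ 2) := by
    refine Finset.sum_le_sum fun i _ => ?_
    rcases le_abs.1 (hfree i) with hx | hx
    · refine mul_le_mul_of_nonneg_left ?_ (by linarith)
      refine hg_anti.antitoneOn (Set.mem_Ici.2 (sq_nonneg _)) (Set.mem_Ici.2 (sq_nonneg _)) ?_
      rw [div_pow, div_pow]
      gcongr ?_ / _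
      nlinarith
    · refine mul_le_mul_of_nonpos_left ?_ (by linarith)
      refine hg_anti.antitoneOn (Set.mem_Ici.2 (sq_nonneg _)) (Set.mem_Ici.2 (sq_nonneg _)) ?_
      rw [div_pow, div_pow]
      gcongr ?_ / _
      nlinarith
  rw [h0, hid] at h1
  by_contra hlt
  push Not at hlt
  linarith [mul_pos (sub_pos.2 hlt) (hGpos z)]
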